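/- Let n ≥ 2 and let φ be an n-qubit stabilizer state, written as φ = |0⟩⊗φ₀ + |1⟩⊗φ₁ with φ₀, φ₁ ∈ ℂ^(2^(n−1)). If φ₀ ≠ 0 and φ₁ ≠ 0, then √2·φ₀ is an (n−1)-qubit stabilizer state, and there exist λ ∈ {1, −1, i, −i} and an (n−1)-qubit Pauli string P such that φ₁ = λ·Pφ₀. -/

import Mathlib

open Matrix

noncomputable section

/-- The single-qubit Pauli matrices. -/
def pauliI : Matrix (Fin 2) (Fin 2) ℂ := 1
def pauliX : Matrix (Fin 2) (Fin 2) ℂ := !![0, 1; 1, 0]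
def pauliY : Matrix (Fin 2) (Fin 2) ℂ := !![0, -Complex.I; Complex.I, 0]
def pauliZ : Matrix (Fin 2) (Fin 2) ℂ := !![1, 0; 0, -1]

/-- Kronecker product of a `2 × 2` matrix (most significant qubit) with a
`2^m × 2^m` matrix, indexed by `Fin (2^(m+1))`. -/
def kron {m : ℕ} (A : Matrix (Fin 2) (Fin 2) ℂ) (B : Matrix (Fin (2 ^ m)) (Fin (2 ^ m)) ℂ) :
    Matrix (Fin (2 ^ (m + 1))) (Fin (2 ^ (m + 1))) ℂ := fun i j =>
  A (if (i : ℕ) < 2 ^ m then 0 else 1) (if (j : ℕ) < 2 ^ m then 0 else 1) *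
    B ⟨(i : ℕ) % 2 ^ m, Nat.mod_lt _ (pow_pos (by norm_num) m)⟩
      ⟨(j : ℕ) % 2 ^ m, Nat.mod_lt _ (pow_pos (by norm_num) m)⟩

/-- `IsPauliString n M` holds iff `M` is a Kronecker product of `n` single-qubit
Pauli matrices. -/
def IsPauliString : (n : ℕ) → Matrix (Fin (2 ^ n)) (Fin (2 ^ n)) ℂ → Prop
  | 0, M => M = 1
  | n + 1, M => ∃ Q ∈ ({pauliI, pauliX, pauliY, pauliZ} : Set (Matrix (Fin 2) (Fin 2) ℂ)),
      ∃ B, IsPauliString n B ∧ M = kron Q B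

/-- An `n`-qubit Pauli LIM: a nonzero scalar multiple of an `n`-qubit Pauli string. -/
def IsPauliLIM (n : ℕ) (A : Matrix (Fin (2 ^ n)) (Fin (2 ^ n)) ℂ) : Prop :=
  ∃ (c : ℂ) (P : Matrix (Fin (2 ^ n)) (Fin (2 ^ n)) ℂ),
    c ≠ 0 ∧ IsPauliString n P ∧ A = c • P

/-- The stabilizer set of a vector: all `n`-qubit Pauli LIMs fixing `φ`. -/
def PauliStab {n : ℕ} (φ : Fin (2 ^ n) → ℂ) : Set (Matrix (Fin (2 ^ n)) (Fin (2 ^ n)) ℂ) :=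
  {A | IsPauliLIM n A ∧ A.mulVec φ = φ}

/-- Two vectors are Pauli-isomorphic if some Pauli LIM maps one to the other. -/
def PauliIso {n : ℕ} (φ ψ : Fin (2 ^ n) → ℂ) : Prop :=
  ∃ A, IsPauliLIM n A ∧ A.mulVec φ = ψ

/-- Membership in the `n`-qubit Pauli group: `i^k · P` with `P` a Pauli string. -/
def InPauliGroup (n : ℕ) (A : Matrix (Fin (2 ^ n)) (Fin (2 ^ n)) ℂ) : Prop :=
  ∃ (k : Fin 4) (P : Matrix (Fin (2 ^ n)) (Fin (2 ^ n)) ℂ),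
    IsPauliString n P ∧ A = (Complex.I ^ (k : ℕ)) • P

/-- The vector `|0⟩⊗φ₀ + |1⟩⊗φ₁`: first `2^m` coordinates are `φ₀`, last are `φ₁`. -/
def dirac {m : ℕ} (φ₀ φ₁ : Fin (2 ^ m) → ℂ) : Fin (2 ^ (m + 1)) → ℂ := fun i =>
  if h : (i : ℕ) < 2 ^ m then φ₀ ⟨i, h⟩
  else φ₁ ⟨(i : ℕ) - 2 ^ m, by
    have h1 := i.isLt
    have h2 : (2 : ℕ) ^ (m + 1) = 2 ^ m + 2 ^ m := by rw [pow_succ]; omega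
    omega⟩

/-- An `n`-qubit stabilizer state: a unit vector stabilized by exactly `2^n`
elements of the Pauli group. -/
def IsStabilizerState (n : ℕ) (φ : Fin (2 ^ n) → ℂ) : Prop :=
  (∑ i, Complex.normSq (φ i)) = 1 ∧
    Set.ncard {A : Matrix (Fin (2 ^ n)) (Fin (2 ^ n)) ℂ |
      InPauliGroup n A ∧ A.mulVec φ = φ} = 2 ^ n

/-- The standard Hermitian inner product on `ℂ^N`. -/
def hinner {N : ℕ} (φ ψ : Fin N → ℂ) : ℂ :=
  ∑ i, (starRingEnd ℂ) (φ i) * ψ i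



/-- `Z^{a_m} ⊗ ⋯ ⊗ Z^{a_1}` (the `j`-th tensor factor is `Z` iff `a j = true`). -/
def zString : (m : ℕ) → (Fin m → Bool) → Matrix (Fin (2 ^ m)) (Fin (2 ^ m)) ℂ
  | 0, _ => 1
  | m + 1, a => kron (if a (Fin.last m) then pauliZ else 1) (zString m (fun j => a j.castSucc))

open Classical in
/-- Number of edges of `G` with both endpoints in the set of vertices
`j` with `x.testBit j = true`. -/
def edgeCount {n : ℕ} (G : SimpleGraph (Fin n)) (x : ℕ) : ℕ :=
  (Finset.univ.filter (fun p : Fin n × Fin n =>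
    p.1 < p.2 ∧ G.Adj p.1 p.2 ∧ x.testBit p.1.val = true ∧ x.testBit p.2.val = true)).card

/-- The graph state of a simple graph on vertices `{0, …, n-1}`; vertex `j`
corresponds to the `j`-th bit of the basis-state index. -/
def graphState {n : ℕ} (G : SimpleGraph (Fin n)) : Fin (2 ^ n) → ℂ :=
  fun x => (-1 : ℂ) ^ edgeCount G (x : ℕ) / Real.sqrt (2 ^ n)

/-- The subfunction of `f` of order `ℓ` obtained by fixing the first `ℓ`
arguments to `a`. -/
def subfun {N : ℕ} (f : (Fin N → Bool) → ℂ) (ℓ : ℕ) (a : Fin ℓ → Bool) :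
    (Fin (N - ℓ) → Bool) → ℂ := fun x =>
  f (fun i => if h : (i : ℕ) < ℓ then a ⟨i, h⟩
      else x ⟨(i : ℕ) - ℓ, by have := i.isLt; omega⟩)

/-- A strong matching: a set of pairwise vertex-disjoint edges of `G` such that
every edge of `G` with both endpoints among the matched vertices is in `M`. -/
def IsStrongMatching {V : Type*} (G : SimpleGraph V) (M : Set (Sym2 V)) : Prop :=
  M ⊆ G.edgeSet ∧
  (∀ e₁ ∈ M, ∀ e₂ ∈ M, e₁ ≠ e₂ → ∀ v, v ∈ e₁ → v ∉ e₂) ∧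
  (∀ e ∈ G.edgeSet, (∀ v ∈ e, ∃ e' ∈ M, v ∈ e') → e ∈ M)

/-- An `(S,T)`-strong matching: a strong matching each of whose edges has one
endpoint in `S` and the other in `T`. -/
def IsSTStrongMatching {V : Type*} (G : SimpleGraph V) (S T : Set V) (M : Set (Sym2 V)) : Prop :=
  IsStrongMatching G M ∧ ∀ e ∈ M, ∃ u ∈ S, ∃ w ∈ T, e = s(u, w)

/-- The `n × n` grid graph. -/
def gridGraph (n : ℕ) : SimpleGraph (Fin n × Fin n) :=
  SimpleGraph.fromRel (fun u v =>
    (u.1 = v.1 ∧ (u.2 : ℕ) + 1 = (v.2 : ℕ)) ∨ (u.2 = v.2 ∧ (u.1 : ℕ) + 1 = (v.1 : ℕ)))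

/-- The amplitude function of the graph state of `G`, on assignments `V → Bool`. -/
def ampGraphState {V : Type*} [Fintype V] (G : SimpleGraph V) (x : V → Bool) : ℂ :=
  (-1 : ℂ) ^ Set.ncard {e ∈ G.edgeSet | ∀ v ∈ e, x v = true} / Real.sqrt (2 ^ Fintype.card V)

open Classical in
/-- The coset state of `C ⊆ {0,…,2^n − 1}`: the uniform superposition over `C`. -/
def cosetState (n : ℕ) (C : Set ℕ) : Fin (2 ^ n) → ℂ :=
  fun x => if (x : ℕ) ∈ C then 1 / Real.sqrt (C.ncard) else 0


/-- `X^{a_m} ⊗ ⋯ ⊗ X^{a_1}` (the `j`-th tensor factor is `X` iff `a j = true`). -/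
def xString : (m : ℕ) → (Fin m → Bool) → Matrix (Fin (2 ^ m)) (Fin (2 ^ m)) ℂ
  | 0, _ => 1
  | m + 1, a => kron (if a (Fin.last m) then pauliX else 1) (xString m (fun j => a j.castSucc))

/-!
The stabilizer group `S` of a nonzero `φ : ℂ^(2^n)` in the Pauli group has at most `2^n` elements:
a Pauli string other than `1` is traceless and no multiple of `1` other than `1` itself fixes `φ`,
so the character of `S` on `ℂ^(2^n)` vanishes off the identity and
`|S| * dim (invariants of S) = 2^n`.

For a stabilizer state `φ = |0⟩⊗φ₀ + |1⟩⊗φ₁` on `m + 1` qubits, the elements `Z^b ⊗ B` of `S` form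
a subgroup of index at most two. Each of them is determined by `B`, which stabilizes `φ₀`, because
`φ₁ ≠ 0` fixes the sign `(-1)^b`. So there are at most `2^m` of them, by the bound for `φ₀`. As
`|S| = 2^(m+1)`, this is an equality and `S` contains some `X Z^b ⊗ B`, which gives `φ₁ = B φ₀`;
since `B` is unitary, the two halves have equal norm.
-/

open scoped Kronecker

lemma pow_mul_pow_of_anticommute {K R : Type*} [CommRing K] [Ring R] [Algebra K R] {x z : R}
    (h : z * x = -(x * z)) (a b : ℕ) :
    z ^ b * x ^ a = (-1 : K) ^ (b * a) • (x ^ a * z ^ b) := by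
  have hxz : SemiconjBy x z ((-1 : K) • z) := by
    rw [SemiconjBy, neg_one_smul, neg_mul, h, neg_neg]
  have hzx : SemiconjBy (z ^ b) x ((-1 : K) ^ b • x) := by
    rw [SemiconjBy, smul_mul_assoc, (hxz.pow_right b).eq, smul_pow, smul_mul_assoc, smul_smul,
      ← mul_pow, neg_one_mul, neg_neg, one_pow, one_smul]
  rw [(hzx.pow_right a).eq, smul_pow, ← pow_mul, smul_mul_assoc]

lemma sum_normSq_mulVec {ι : Type*} [Fintype ι] [DecidableEq ι] (U : unitaryGroup ι ℂ)
    (v : ι → ℂ) : ∑ i, Complex.normSq ((U.1 *ᵥ v) i) = ∑ i, Complex.normSq (v i) := by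
  have hsum (w : ι → ℂ) : ((∑ i, Complex.normSq (w i) : ℝ) : ℂ) = star w ⬝ᵥ w := by
    simp [dotProduct, Complex.normSq_eq_conj_mul_self]
  have hdot : star (U.1 *ᵥ v) ⬝ᵥ U.1 *ᵥ v = star v ⬝ᵥ v := by
    rw [star_mulVec, ← dotProduct_mulVec, mulVec_mulVec, ← star_eq_conjTranspose,
      UnitaryGroup.star_mul_self, one_mulVec]
  rw [← hsum, ← hsum] at hdot
  exact_mod_cast hdot

section Kronecker

variable {m : ℕ}

/-- The splitting of an index of `ℂ^(2^(m+1))` into its most significant bit and the rest, under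
which `kron` becomes Mathlib's Kronecker product. -/
def qubitEquiv (m : ℕ) : Fin 2 × Fin (2 ^ m) ≃ Fin (2 ^ (m + 1)) :=
  finProdFinEquiv.trans (finCongr (pow_succ' 2 m).symm)

lemma qubitEquiv_val (c : Fin 2) (i : Fin (2 ^ m)) :
    (qubitEquiv m (c, i) : ℕ) = i + 2 ^ m * c := rfl

lemma kron_apply (A : Matrix (Fin 2) (Fin 2) ℂ) (B : Matrix (Fin (2 ^ m)) (Fin (2 ^ m)) ℂ)
    (c d : Fin 2) (i j : Fin (2 ^ m)) :
    kron A B (qubitEquiv m (c, i)) (qubitEquiv m (d, j)) = A c d * B i j := by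
  have high (c : Fin 2) (i : Fin (2 ^ m)) :
      (if (qubitEquiv m (c, i) : ℕ) < 2 ^ m then (0 : Fin 2) else 1) = c := by
    fin_cases c <;> simp [qubitEquiv_val]
  have low (c : Fin 2) (i : Fin (2 ^ m)) : (qubitEquiv m (c, i) : ℕ) % 2 ^ m = i := by
    rw [qubitEquiv_val, Nat.add_mul_mod_self_left, Nat.mod_eq_of_lt i.isLt]
  simp only [kron, high, low]

lemma kron_eq_submatrix (A : Matrix (Fin 2) (Fin 2) ℂ)
    (B : Matrix (Fin (2 ^ m)) (Fin (2 ^ m)) ℂ) :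
    kron A B = (A ⊗ₖ B).submatrix (qubitEquiv m).symm (qubitEquiv m).symm := by
  ext i j
  obtain ⟨⟨c, i⟩, rfl⟩ := (qubitEquiv m).surjective i
  obtain ⟨⟨d, j⟩, rfl⟩ := (qubitEquiv m).surjective j
  simp [kron_apply]

lemma kron_mul_kron (A C : Matrix (Fin 2) (Fin 2) ℂ)
    (B D : Matrix (Fin (2 ^ m)) (Fin (2 ^ m)) ℂ) :
    kron A B * kron C D = kron (A * C) (B * D) := by
  simp only [kron_eq_submatrix, submatrix_mul_equiv, mul_kronecker_mul]

lemma kron_one_one : kron (1 : Matrix (Fin 2) (Fin 2) ℂ)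
    (1 : Matrix (Fin (2 ^ m)) (Fin (2 ^ m)) ℂ) = 1 := by
  rw [kron_eq_submatrix, one_kronecker_one, submatrix_one_equiv]

lemma conjTranspose_kron (A : Matrix (Fin 2) (Fin 2) ℂ)
    (B : Matrix (Fin (2 ^ m)) (Fin (2 ^ m)) ℂ) : (kron A B)ᴴ = kron Aᴴ Bᴴ := by
  simp only [kron_eq_submatrix, conjTranspose_submatrix, conjTranspose_kronecker]

lemma trace_kron (A : Matrix (Fin 2) (Fin 2) ℂ) (B : Matrix (Fin (2 ^ m)) (Fin (2 ^ m)) ℂ) :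
    (kron A B).trace = A.trace * B.trace := by
  rw [kron_eq_submatrix, ← trace_kronecker]
  exact (qubitEquiv m).symm.sum_comp fun p => (A ⊗ₖ B) p p

lemma kron_smul (c : ℂ) (A : Matrix (Fin 2) (Fin 2) ℂ)
    (B : Matrix (Fin (2 ^ m)) (Fin (2 ^ m)) ℂ) : kron A (c • B) = c • kron A B := by
  simp only [kron_eq_submatrix, kronecker_smul, submatrix_smul, Pi.smul_apply]

lemma smul_kron (c : ℂ) (A : Matrix (Fin 2) (Fin 2) ℂ)
    (B : Matrix (Fin (2 ^ m)) (Fin (2 ^ m)) ℂ) : kron (c • A) B = c • kron A B := by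
  simp only [kron_eq_submatrix, smul_kronecker, submatrix_smul, Pi.smul_apply]

lemma dirac_apply (φ₀ φ₁ : Fin (2 ^ m) → ℂ) (c : Fin 2) (i : Fin (2 ^ m)) :
    dirac φ₀ φ₁ (qubitEquiv m (c, i)) = ![φ₀, φ₁] c i := by
  fin_cases c <;> simp [dirac, qubitEquiv_val]

lemma dirac_inj {φ₀ φ₁ ψ₀ ψ₁ : Fin (2 ^ m) → ℂ} :
    dirac φ₀ φ₁ = dirac ψ₀ ψ₁ ↔ φ₀ = ψ₀ ∧ φ₁ = ψ₁ := by
  simp only [funext_iff, ← (qubitEquiv m).forall_congr_right, Prod.forall, dirac_apply,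
    Fin.forall_fin_two, cons_val_zero, cons_val_one]

lemma sum_normSq_dirac (φ₀ φ₁ : Fin (2 ^ m) → ℂ) :
    ∑ i, Complex.normSq (dirac φ₀ φ₁ i) =
      ∑ i, Complex.normSq (φ₀ i) + ∑ i, Complex.normSq (φ₁ i) := by
  rw [← (qubitEquiv m).sum_comp, Fintype.sum_prod_type, Fin.sum_univ_two]
  simp only [dirac_apply, cons_val_zero, cons_val_one]

lemma kron_mulVec_dirac (A : Matrix (Fin 2) (Fin 2) ℂ)
    (B : Matrix (Fin (2 ^ m)) (Fin (2 ^ m)) ℂ) (φ₀ φ₁ : Fin (2 ^ m) → ℂ) :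
    kron A B *ᵥ dirac φ₀ φ₁ =
      dirac (A 0 0 • B *ᵥ φ₀ + A 0 1 • B *ᵥ φ₁) (A 1 0 • B *ᵥ φ₀ + A 1 1 • B *ᵥ φ₁) := by
  ext i
  obtain ⟨⟨c, i⟩, rfl⟩ := (qubitEquiv m).surjective i
  rw [dirac_apply, mulVec, dotProduct, ← (qubitEquiv m).sum_comp, Fintype.sum_prod_type]
  fin_cases c <;>
    simp [kron_apply, dirac_apply, mulVec, dotProduct, Finset.mul_sum, mul_assoc]

end Kronecker

section SingleQubit

/-- The set of the four single-qubit Pauli matrices, the alphabet of `IsPauliString`. -/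
def singlePaulis : Set (Matrix (Fin 2) (Fin 2) ℂ) := {pauliI, pauliX, pauliY, pauliZ}

lemma finite_singlePaulis : singlePaulis.Finite := Set.toFinite {pauliI, pauliX, pauliY, pauliZ}

lemma pauliX_sq : pauliX ^ 2 = 1 := by
  rw [sq, pauliX, mul_fin_two, one_fin_two]; simp

lemma pauliZ_sq : pauliZ ^ 2 = 1 := by
  rw [sq, pauliZ, mul_fin_two, one_fin_two]; simp

lemma pauliZ_mul_pauliX : pauliZ * pauliX = -(pauliX * pauliZ) := by
  simp [pauliX, pauliZ]

lemma pauliX_mul_pauliZ : pauliX * pauliZ = (Complex.I ^ 3) • pauliY := by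
  simp [pauliX, pauliZ, pauliY, pow_succ]

lemma pauliY_eq : pauliY = Complex.I • (pauliX * pauliZ) := by
  rw [pauliX_mul_pauliZ, smul_smul, ← pow_succ', Complex.I_pow_four, one_smul]

lemma pauliZ_pow (b : ℕ) : pauliZ ^ b = !![1, 0; 0, (-1) ^ b] := by
  induction b with
  | zero => simp [one_fin_two]
  | succ b ih => rw [pow_succ, ih, pauliZ]; simp [pow_succ]

lemma pauli_mul_pauli (a b c d : ℕ) :
    pauliX ^ a * pauliZ ^ b * (pauliX ^ c * pauliZ ^ d) =
      (-1 : ℂ) ^ (b * c) • (pauliX ^ (a + c) * pauliZ ^ (b + d)) := by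
  rw [mul_assoc, ← mul_assoc (pauliZ ^ b),
    pow_mul_pow_of_anticommute (K := ℂ) pauliZ_mul_pauliX c b, smul_mul_assoc, mul_smul_comm,
    mul_assoc, ← mul_assoc, ← pow_add, ← pow_add]

lemma exists_eq_smul_pow_mul_pow {Q : Matrix (Fin 2) (Fin 2) ℂ} (hQ : Q ∈ singlePaulis) :
    ∃ k a b : ℕ, Q = Complex.I ^ k • (pauliX ^ a * pauliZ ^ b) := by
  rcases hQ with rfl | rfl | rfl | rfl
  · exact ⟨0, 0, 0, by simp [pauliI]⟩
  · exact ⟨0, 1, 0, by simp⟩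
  · exact ⟨1, 1, 1, by simpa using pauliY_eq⟩
  · exact ⟨0, 0, 1, by simp⟩

lemma exists_pow_mul_pow_eq_smul (a b : ℕ) :
    ∃ k : ℕ, ∃ Q ∈ singlePaulis, pauliX ^ a * pauliZ ^ b = Complex.I ^ k • Q := by
  rw [pow_eq_pow_mod a pauliX_sq, pow_eq_pow_mod b pauliZ_sq]
  rcases Nat.mod_two_eq_zero_or_one a with ha | ha <;>
    rcases Nat.mod_two_eq_zero_or_one b with hb | hb <;> rw [ha, hb]
  · exact ⟨0, pauliI, by simp [singlePaulis], by simp [pauliI]⟩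
  · exact ⟨0, pauliZ, by simp [singlePaulis], by simp⟩
  · exact ⟨0, pauliX, by simp [singlePaulis], by simp⟩
  · exact ⟨3, pauliY, by simp [singlePaulis], by simpa using pauliX_mul_pauliZ⟩

lemma conjTranspose_singlePauli {Q : Matrix (Fin 2) (Fin 2) ℂ} (hQ : Q ∈ singlePaulis) :
    Qᴴ = Q := by
  rcases hQ with rfl | rfl | rfl | rfl <;> ext i j <;> fin_cases i <;> fin_cases j <;>
    simp [pauliI, pauliX, pauliY, pauliZ]

lemma conjTranspose_pauliZ : pauliZᴴ = pauliZ :=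
  conjTranspose_singlePauli (by simp [singlePaulis])

lemma singlePauli_mul_self {Q : Matrix (Fin 2) (Fin 2) ℂ} (hQ : Q ∈ singlePaulis) :
    Q * Q = 1 := by
  rcases hQ with rfl | rfl | rfl | rfl <;>
    simp [pauliI, pauliX, pauliY, pauliZ, one_fin_two]

lemma singlePauli_eq_one_or_trace_eq_zero {Q : Matrix (Fin 2) (Fin 2) ℂ} (hQ : Q ∈ singlePaulis) :
    Q = 1 ∨ Q.trace = 0 := by
  rcases hQ with rfl | rfl | rfl | rfl <;> simp [pauliI, pauliX, pauliY, pauliZ, trace_fin_two]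

end SingleQubit

section PauliGroup

variable {n : ℕ}

lemma IsPauliString.conjTranspose_eq : ∀ {n : ℕ} {P : Matrix (Fin (2 ^ n)) (Fin (2 ^ n)) ℂ},
    IsPauliString n P → Pᴴ = P
  | 0, _, rfl => conjTranspose_one
  | _ + 1, _, ⟨_, hQ, _, hB, rfl⟩ => by
    rw [conjTranspose_kron, conjTranspose_singlePauli hQ, hB.conjTranspose_eq]

lemma IsPauliString.mul_self : ∀ {n : ℕ} {P : Matrix (Fin (2 ^ n)) (Fin (2 ^ n)) ℂ},
    IsPauliString n P → P * P = 1
  | 0, _, rfl => one_mul 1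
  | _ + 1, _, ⟨_, hQ, _, hB, rfl⟩ => by
    rw [kron_mul_kron, singlePauli_mul_self hQ, hB.mul_self, kron_one_one]

lemma IsPauliString.eq_one_or_trace_eq_zero :
    ∀ {n : ℕ} {P : Matrix (Fin (2 ^ n)) (Fin (2 ^ n)) ℂ},
    IsPauliString n P → P = 1 ∨ P.trace = 0
  | 0, _, rfl => .inl rfl
  | _ + 1, _, ⟨_, hQ, _, hB, rfl⟩ => by
    rw [trace_kron]
    rcases singlePauli_eq_one_or_trace_eq_zero hQ with rfl | hQ
    · rcases hB.eq_one_or_trace_eq_zero with rfl | hB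
      · exact .inl kron_one_one
      · exact .inr (by rw [hB, mul_zero])
    · exact .inr (by rw [hQ, zero_mul])

lemma isPauliString_one : ∀ n : ℕ, IsPauliString n 1
  | 0 => rfl
  | n + 1 => ⟨pauliI, .inl rfl, 1, isPauliString_one n, kron_one_one.symm⟩

lemma finite_setOf_isPauliString : ∀ n : ℕ, {P | IsPauliString n P}.Finite
  | 0 => Set.finite_singleton 1
  | n + 1 => (finite_singlePaulis.image2 kron (finite_setOf_isPauliString n)).subset
      fun _ ⟨Q, hQ, B, hB, hP⟩ => ⟨Q, hQ, B, hB, hP.symm⟩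

namespace InPauliGroup

variable {A : Matrix (Fin (2 ^ n)) (Fin (2 ^ n)) ℂ}

lemma I_pow_smul (hA : InPauliGroup n A) (k : ℕ) : InPauliGroup n (Complex.I ^ k • A) := by
  obtain ⟨j, P, hP, rfl⟩ := hA
  refine ⟨⟨(k + j) % 4, Nat.mod_lt _ (by norm_num)⟩, P, hP, ?_⟩
  rw [smul_smul, ← pow_add, Complex.I_pow_eq_pow_mod]

lemma neg_one_pow_smul (hA : InPauliGroup n A) (k : ℕ) : InPauliGroup n ((-1 : ℂ) ^ k • A) := by
  simpa only [pow_mul, Complex.I_sq] using hA.I_pow_smul (2 * k)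

lemma star_mem (hA : InPauliGroup n A) : InPauliGroup n (star A) := by
  obtain ⟨k, P, hP, rfl⟩ := hA
  have hI : star (Complex.I ^ (k : ℕ)) = Complex.I ^ (3 * k : ℕ) := by
    rw [pow_mul, Complex.I_pow_three, star_pow]; simp
  rw [star_smul, hI, star_eq_conjTranspose, hP.conjTranspose_eq]
  exact I_pow_smul ⟨0, P, hP, by simp⟩ _

lemma mem_unitaryGroup (hA : InPauliGroup n A) : A ∈ unitaryGroup (Fin (2 ^ n)) ℂ := by
  obtain ⟨k, P, hP, rfl⟩ := hA
  rw [mem_unitaryGroup_iff, star_smul, star_eq_conjTranspose, hP.conjTranspose_eq,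
    smul_mul_smul_comm, hP.mul_self, star_pow, ← mul_pow]
  simp

lemma succ_iff {A : Matrix (Fin (2 ^ (n + 1))) (Fin (2 ^ (n + 1))) ℂ} :
    InPauliGroup (n + 1) A ↔
      ∃ a b : ℕ, ∃ B, InPauliGroup n B ∧ A = kron (pauliX ^ a * pauliZ ^ b) B := by
  constructor
  · rintro ⟨k, _, ⟨Q, hQ, B, hB, rfl⟩, rfl⟩
    obtain ⟨j, a, b, rfl⟩ := exists_eq_smul_pow_mul_pow hQ
    exact ⟨a, b, _, I_pow_smul ⟨k, B, hB, rfl⟩ j, by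
      rw [smul_kron, kron_smul, kron_smul, smul_comm]⟩
  · rintro ⟨a, b, _, ⟨k, B, hB, rfl⟩, rfl⟩
    obtain ⟨j, Q, hQ, hQab⟩ := exists_pow_mul_pow_eq_smul a b
    rw [hQab, smul_kron, kron_smul]
    have hP : IsPauliString (n + 1) (kron Q B) := ⟨Q, hQ, B, hB, rfl⟩
    exact I_pow_smul ⟨k, _, hP, rfl⟩ j

lemma mul : ∀ {n : ℕ} {A B : Matrix (Fin (2 ^ n)) (Fin (2 ^ n)) ℂ},
    InPauliGroup n A → InPauliGroup n B → InPauliGroup n (A * B)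
  | 0, _, _, hA, hB => by
    obtain ⟨j, P, hP, rfl⟩ := hA
    obtain rfl : P = 1 := hP
    rw [smul_mul_assoc, one_mul]
    exact hB.I_pow_smul j
  | n + 1, _, _, hA, hB => by
    obtain ⟨a, b, C, hC, rfl⟩ := succ_iff.1 hA
    obtain ⟨c, d, D, hD, rfl⟩ := succ_iff.1 hB
    refine succ_iff.2 ⟨a + c, b + d, _, (mul hC hD).neg_one_pow_smul (b * c), ?_⟩
    rw [kron_mul_kron, kron_smul, ← smul_kron, pauli_mul_pauli]

end InPauliGroup

lemma finite_setOf_inPauliGroup (n : ℕ) : {A | InPauliGroup n A}.Finite :=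
  (Set.finite_univ.image2 (fun (k : Fin 4) P => Complex.I ^ (k : ℕ) • P)
    (finite_setOf_isPauliString n)).subset
    fun _ ⟨k, P, hP, hA⟩ => ⟨k, trivial, P, hP, hA.symm⟩

/-- The `n`-qubit Pauli group as a subgroup of the unitary group; its elements are exactly the
matrices satisfying `InPauliGroup n`. -/
def pauliGroup (n : ℕ) : Subgroup (unitaryGroup (Fin (2 ^ n)) ℂ) where
  carrier := {U | InPauliGroup n U}
  mul_mem' := InPauliGroup.mul
  one_mem' := ⟨0, 1, isPauliString_one n, by simp⟩
  inv_mem' := InPauliGroup.star_mem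

instance (n : ℕ) : Finite (pauliGroup n) :=
  ((finite_setOf_inPauliGroup n).preimage Subtype.val_injective.injOn).to_subtype

end PauliGroup

section Representation

variable {k G V : Type*} [Field k] [CharZero k] [Group G] [Finite G] [AddCommGroup V] [Module k V]
  [FiniteDimensional k V]

lemma card_mul_finrank_invariants (ρ : Representation k G V)
    (hχ : ∀ g ≠ 1, ρ.character g = 0) :
    Nat.card G * Module.finrank k ρ.invariants = Module.finrank k V := by
  cases nonempty_fintype G
  have hG : (Nat.card G : k) ≠ 0 := Nat.cast_ne_zero.2 Nat.card_pos.ne'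
  let := invertibleOfNonzero hG
  have h := ρ.card_inv_mul_sum_char_eq_finrank
  rw [Fintype.sum_eq_single 1 hχ, ρ.char_one, inv_mul_eq_iff_eq_mul₀ hG] at h
  exact_mod_cast h.symm

lemma card_le_finrank_of_character_eq_zero (ρ : Representation k G V)
    (hχ : ∀ g ≠ 1, ρ.character g = 0) {v : V} (hv : v ∈ ρ.invariants) (hv₀ : v ≠ 0) :
    Nat.card G ≤ Module.finrank k V := by
  have hpos : 0 < Module.finrank k ρ.invariants :=
    Module.finrank_pos_iff_exists_ne_zero.2 ⟨⟨v, hv⟩, by simpa using hv₀⟩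
  rw [← card_mul_finrank_invariants ρ hχ]
  exact Nat.le_mul_of_pos_right _ hpos

end Representation

section StabilizerGroup

variable {n : ℕ}

/-- The stabilizer of `φ` in the Pauli group, the group counted by `IsStabilizerState`. -/
def stabilizerGroup (φ : Fin (2 ^ n) → ℂ) : Subgroup (unitaryGroup (Fin (2 ^ n)) ℂ) :=
  pauliGroup n ⊓ MulAction.stabilizer _ φ

instance (φ : Fin (2 ^ n) → ℂ) : Finite (stabilizerGroup φ) :=
  Finite.of_injective (Subgroup.inclusion inf_le_left) (Subgroup.inclusion_injective _)

lemma stabilizerGroup_le_pauliGroup (φ : Fin (2 ^ n) → ℂ) : stabilizerGroup φ ≤ pauliGroup n :=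
  inf_le_left

lemma mulVec_eq_of_mem_stabilizerGroup {φ : Fin (2 ^ n) → ℂ}
    {U : unitaryGroup (Fin (2 ^ n)) ℂ} (hU : U ∈ stabilizerGroup φ) : U.1 *ᵥ φ = φ :=
  hU.2

lemma isStabilizerState_iff {φ : Fin (2 ^ n) → ℂ} :
    IsStabilizerState n φ ↔
      ∑ i, Complex.normSq (φ i) = 1 ∧ Nat.card (stabilizerGroup φ) = 2 ^ n := by
  rw [IsStabilizerState, ← Nat.card_coe_set_eq]
  refine and_congr_right' (Eq.congr_left (Nat.card_congr ?_))
  exact (Equiv.subtypeSubtypeEquivSubtype fun h => h.1.mem_unitaryGroup).symm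

lemma stabilizerGroup_smul {c : ℂ} (hc : c ≠ 0) (φ : Fin (2 ^ n) → ℂ) :
    stabilizerGroup (c • φ) = stabilizerGroup φ := by
  ext U
  refine and_congr_right' ?_
  change U • c • φ = c • φ ↔ U • φ = φ
  rw [smul_comm, smul_right_inj hc]

lemma eq_one_or_trace_eq_zero_of_mem_stabilizerGroup {φ : Fin (2 ^ n) → ℂ} (hφ : φ ≠ 0)
    {U : unitaryGroup (Fin (2 ^ n)) ℂ} (hU : U ∈ stabilizerGroup φ) :
    U = 1 ∨ U.1.trace = 0 := by
  have hfix := mulVec_eq_of_mem_stabilizerGroup hU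
  obtain ⟨k, P, hP, hUP⟩ := hU.1
  rcases hP.eq_one_or_trace_eq_zero with rfl | htr
  · left
    have hk : Complex.I ^ (k : ℕ) • φ = (1 : ℂ) • φ := by
      rwa [hUP, smul_mulVec, one_mulVec, ← one_smul ℂ φ, smul_comm, one_smul] at hfix
    ext1
    rw [hUP, smul_left_injective ℂ hφ hk, one_smul]
    rfl
  · exact .inr (by rw [hUP, trace_smul, htr, smul_zero])

lemma card_stabilizerGroup_le {φ : Fin (2 ^ n) → ℂ} (hφ : φ ≠ 0) :
    Nat.card (stabilizerGroup φ) ≤ 2 ^ n := by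
  have hχ (U : stabilizerGroup φ) (hU : U ≠ 1) :
      (Representation.ofDistribMulAction ℂ (stabilizerGroup φ) (Fin (2 ^ n) → ℂ)).character U
        = 0 := by
    have htr := (eq_one_or_trace_eq_zero_of_mem_stabilizerGroup hφ U.2).resolve_left
      (by simpa using hU)
    rwa [← trace_toLin'_eq] at htr
  simpa using card_le_finrank_of_character_eq_zero _ hχ (v := φ) (fun U => U.2.2) hφ

end StabilizerGroup

section Halves

variable {m : ℕ}

/-- The elements `Z^b ⊗ B` of the `(m + 1)`-qubit Pauli group, those preserving the splitting of a
vector into its two halves. -/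
def blockDiagPauliGroup (m : ℕ) : Subgroup (unitaryGroup (Fin (2 ^ (m + 1))) ℂ) where
  carrier := {U | ∃ b : ℕ, ∃ B ∈ pauliGroup m, U.1 = kron (pauliZ ^ b) B.1}
  mul_mem' := by
    rintro U V ⟨b, B, hB, hU⟩ ⟨d, D, hD, hV⟩
    exact ⟨b + d, B * D, mul_mem hB hD, by
      rw [UnitaryGroup.mul_val U, hU, hV, kron_mul_kron, ← pow_add, UnitaryGroup.mul_val]⟩
  one_mem' := ⟨0, 1, one_mem _, kron_one_one.symm⟩
  inv_mem' := by
    rintro U ⟨b, B, hB, hU⟩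
    exact ⟨b, B⁻¹, inv_mem hB, by
      rw [UnitaryGroup.inv_val, hU, star_eq_conjTranspose, conjTranspose_kron, conjTranspose_pow,
        conjTranspose_pauliZ]
      rfl⟩

lemma exists_eq_kron_of_notMem_blockDiagPauliGroup {U : unitaryGroup (Fin (2 ^ (m + 1))) ℂ}
    (hU : U ∈ pauliGroup (m + 1)) (hU' : U ∉ blockDiagPauliGroup m) :
    ∃ b : ℕ, ∃ B ∈ pauliGroup m, U.1 = kron (pauliX * pauliZ ^ b) B.1 := by
  obtain ⟨a, b, B, hB, hUB⟩ := InPauliGroup.succ_iff.1 hU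
  refine ⟨b, ⟨B, hB.mem_unitaryGroup⟩, hB, ?_⟩
  rw [pow_eq_pow_mod a pauliX_sq] at hUB
  rcases Nat.mod_two_eq_zero_or_one a with ha | ha <;> rw [ha] at hUB
  · exact absurd ⟨b, ⟨B, hB.mem_unitaryGroup⟩, hB, by simpa using hUB⟩ hU'
  · rw [hUB, pow_one]

lemma mul_mem_blockDiagPauliGroup {U V : unitaryGroup (Fin (2 ^ (m + 1))) ℂ}
    (hU : U ∈ pauliGroup (m + 1)) (hV : V ∈ pauliGroup (m + 1))
    (hU' : U ∉ blockDiagPauliGroup m) (hV' : V ∉ blockDiagPauliGroup m) :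
    U * V ∈ blockDiagPauliGroup m := by
  obtain ⟨b, B, hB, hUB⟩ := exists_eq_kron_of_notMem_blockDiagPauliGroup hU hU'
  obtain ⟨d, D, hD, hVD⟩ := exists_eq_kron_of_notMem_blockDiagPauliGroup hV hV'
  have hBD : InPauliGroup m ((-1 : ℂ) ^ b • (B.1 * D.1)) :=
    (InPauliGroup.mul hB hD).neg_one_pow_smul b
  have hXZ : pauliX * pauliZ ^ b * (pauliX * pauliZ ^ d) = (-1 : ℂ) ^ b • pauliZ ^ (b + d) := by
    simpa [pauliX_sq] using pauli_mul_pauli 1 b 1 d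
  refine ⟨b + d, ⟨_, hBD.mem_unitaryGroup⟩, hBD, ?_⟩
  rw [UnitaryGroup.mul_val, hUB, hVD, kron_mul_kron, hXZ, smul_kron, kron_smul]

lemma two_mul_card_inf_blockDiagPauliGroup {K : Subgroup (unitaryGroup (Fin (2 ^ (m + 1))) ℂ)}
    (hK : K ≤ pauliGroup (m + 1)) (hKH : ¬ K ≤ blockDiagPauliGroup m) :
    2 * Nat.card (blockDiagPauliGroup m ⊓ K : Subgroup _) = Nat.card K := by
  obtain ⟨U, hUK, hU⟩ := SetLike.not_le_iff_exists.1 hKH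
  have hindex : (blockDiagPauliGroup m).relIndex K = 2 :=
    Subgroup.relIndex_eq_two_iff_exists_notMem_and.2 ⟨U, hUK, hU, fun V hV =>
      or_iff_not_imp_right.2 fun hV' => mul_mem_blockDiagPauliGroup (hK hV) (hK hUK) hV' hU⟩
  have hinf : blockDiagPauliGroup m ⊓ K ≤ K := inf_le_right
  have h := Subgroup.relIndex_mul_relIndex _ _ K bot_le hinf
  rwa [Subgroup.relIndex_bot_left, Subgroup.relIndex_bot_left, Subgroup.inf_relIndex_right, hindex,
    mul_comm] at h

lemma kron_pauliZ_pow_mulVec_dirac (b : ℕ) (B : Matrix (Fin (2 ^ m)) (Fin (2 ^ m)) ℂ)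
    (φ₀ φ₁ : Fin (2 ^ m) → ℂ) :
    kron (pauliZ ^ b) B *ᵥ dirac φ₀ φ₁ = dirac (B *ᵥ φ₀) ((-1 : ℂ) ^ b • B *ᵥ φ₁) := by
  rw [kron_mulVec_dirac, pauliZ_pow]
  simp

lemma kron_pauliX_mul_pauliZ_pow_mulVec_dirac (b : ℕ) (B : Matrix (Fin (2 ^ m)) (Fin (2 ^ m)) ℂ)
    (φ₀ φ₁ : Fin (2 ^ m) → ℂ) :
    kron (pauliX * pauliZ ^ b) B *ᵥ dirac φ₀ φ₁ = dirac ((-1 : ℂ) ^ b • B *ᵥ φ₁) (B *ᵥ φ₀) := by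
  rw [kron_mulVec_dirac, pauliZ_pow, pauliX, mul_fin_two]
  simp

lemma card_blockDiagPauliGroup_inf_stabilizerGroup_le (φ₀ : Fin (2 ^ m) → ℂ)
    {φ₁ : Fin (2 ^ m) → ℂ} (h₁ : φ₁ ≠ 0) :
    Nat.card (blockDiagPauliGroup m ⊓ stabilizerGroup (dirac φ₀ φ₁) : Subgroup _) ≤
      Nat.card (stabilizerGroup φ₀) := by
  have hfix (U : (blockDiagPauliGroup m ⊓ stabilizerGroup (dirac φ₀ φ₁) : Subgroup _)) :
      ∃ b : ℕ, ∃ B : stabilizerGroup φ₀,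
        U.1.1 = kron (pauliZ ^ b) B.1.1 ∧ (-1 : ℂ) ^ b • B.1.1 *ᵥ φ₁ = φ₁ := by
    obtain ⟨U, ⟨b, B, hB, hUB⟩, hU⟩ := U
    replace hU := mulVec_eq_of_mem_stabilizerGroup hU
    rw [hUB, kron_pauliZ_pow_mulVec_dirac, dirac_inj] at hU
    exact ⟨b, ⟨B, hB, hU.1⟩, hUB, hU.2⟩
  choose b B hUB hφ₁ using hfix
  refine Nat.card_le_card_of_injective B fun U V hUV => Subtype.ext (Subtype.ext ?_)
  have hsign : (-1 : ℂ) ^ b U = (-1) ^ b V := by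
    have hBφ₁ : (B U).1.1 *ᵥ φ₁ ≠ 0 := fun h => h₁ (by rw [← hφ₁ U, h, smul_zero])
    exact smul_left_injective ℂ hBφ₁ ((hφ₁ U).trans (hUV ▸ (hφ₁ V).symm))
  rw [hUB, hUB, hUV, pauliZ_pow, pauliZ_pow, hsign]

lemma exists_mulVec_eq_of_not_le_blockDiagPauliGroup {φ₀ φ₁ : Fin (2 ^ m) → ℂ}
    (h : ¬ stabilizerGroup (dirac φ₀ φ₁) ≤ blockDiagPauliGroup m) :
    ∃ B ∈ pauliGroup m, B.1 *ᵥ φ₀ = φ₁ := by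
  obtain ⟨U, hU, hU'⟩ := SetLike.not_le_iff_exists.1 h
  obtain ⟨b, B, hB, hUB⟩ := exists_eq_kron_of_notMem_blockDiagPauliGroup hU.1 hU'
  have hfix := mulVec_eq_of_mem_stabilizerGroup hU
  rw [hUB, kron_pauliX_mul_pauliZ_pow_mulVec_dirac, dirac_inj] at hfix
  exact ⟨B, hB, hfix.2⟩

lemma card_stabilizerGroup_of_dirac {φ₀ φ₁ : Fin (2 ^ m) → ℂ}
    (hφ : Nat.card (stabilizerGroup (dirac φ₀ φ₁)) = 2 ^ (m + 1)) (h₀ : φ₀ ≠ 0) (h₁ : φ₁ ≠ 0) :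
    Nat.card (stabilizerGroup φ₀) = 2 ^ m ∧ ∃ B ∈ pauliGroup m, B.1 *ᵥ φ₀ = φ₁ := by
  have hdiag := card_blockDiagPauliGroup_inf_stabilizerGroup_le φ₀ h₁
  have hle := card_stabilizerGroup_le h₀
  have hnot : ¬ stabilizerGroup (dirac φ₀ φ₁) ≤ blockDiagPauliGroup m := fun h => by
    rw [inf_eq_right.2 h, hφ, pow_succ] at hdiag
    have := Nat.two_pow_pos m
    lia
  have htwo := (two_mul_card_inf_blockDiagPauliGroup (stabilizerGroup_le_pauliGroup _) hnot).trans
    (hφ.trans (pow_succ' 2 m))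
  exact ⟨by lia, exists_mulVec_eq_of_not_le_blockDiagPauliGroup hnot⟩

end Halves

/-- The two halves of a stabilizer state are (normalized) stabilizer states and are
related by a Pauli LIM with scalar in `{1, −1, i, −i}`. Here `m` plays the role of
`n − 1`, so the hypothesis `n ≥ 2` is `1 ≤ m`. -/
theorem stabilizer_state_halves (m : ℕ) (hm : 1 ≤ m)
    (φ : Fin (2 ^ (m + 1)) → ℂ) (hφ : IsStabilizerState (m + 1) φ)
    (φ₀ φ₁ : Fin (2 ^ m) → ℂ) (hsplit : φ = dirac φ₀ φ₁)
    (h₀ : φ₀ ≠ 0) (h₁ : φ₁ ≠ 0) :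
    IsStabilizerState m ((Real.sqrt 2 : ℂ) • φ₀) ∧
      ∃ lam ∈ ({1, -1, Complex.I, -Complex.I} : Set ℂ),
        ∃ P : Matrix (Fin (2 ^ m)) (Fin (2 ^ m)) ℂ,
          IsPauliString m P ∧ φ₁ = lam • P.mulVec φ₀ := by
  subst hsplit
  obtain ⟨hnorm, hcard⟩ := isStabilizerState_iff.1 hφ
  obtain ⟨hcard₀, B, hB, rfl⟩ := card_stabilizerGroup_of_dirac hcard h₀ h₁
  refine ⟨isStabilizerState_iff.2 ⟨?_, ?_⟩, ?_⟩
  · rw [sum_normSq_dirac, sum_normSq_mulVec, ← two_mul] at hnorm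
    simpa [Finset.mul_sum] using hnorm
  · rw [stabilizerGroup_smul (by simp), hcard₀]
  · obtain ⟨k, P, hP, hBP⟩ := hB
    refine ⟨Complex.I ^ (k : ℕ), ?_, P, hP, by rw [hBP, smul_mulVec]⟩
    fin_cases k <;> simp [pow_succ]

end
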